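/- Let T be a tiling of ℝ^d such that 𝒫(T) is admissible and linearly repetitive, and let w be a real-valued function on the boxes of ℝ^d which is subadditive and asymptotically T-invariant. Then there exists L ∈ ℝ such that for every sequence (B_n) of boxes where B_n is an r_n-box and r_n → ∞, the limit lim_{n→∞} w(B_n)/|B_n| exists and equals L (in particular it is independent of the sequence). -/

import Mathlib

open Metric Set Filter MeasureTheory Topology

noncomputable section

/-- Points of `ℝ^d`. -/
abbrev Pt (d : ℕ) := EuclideanSpace ℝ (Fin d)

variable (d : ℕ)

/-- A tile: a subset of `ℝ^d` homeomorphic to the closed unit ball. -/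
def IsTile (m : Set (Pt d)) : Prop :=
  Nonempty (m ≃ₜ (Metric.closedBall (0 : Pt d) 1))

/-- A pattern: a finite nonempty collection of tiles whose interiors are pairwise disjoint. -/
def IsPattern (M : Set (Set (Pt d))) : Prop :=
  M.Finite ∧ M.Nonempty ∧ (∀ m ∈ M, IsTile d m) ∧
    M.Pairwise fun m m' => interior m ∩ interior m' = ∅

/-- A tiling of `ℝ^d`: a collection of tiles with pairwise disjoint interiors covering `ℝ^d`. -/
def IsTiling (T : Set (Set (Pt d))) : Prop :=
  (∀ m ∈ T, IsTile d m) ∧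
    (T.Pairwise fun m m' => interior m ∩ interior m' = ∅) ∧ ⋃₀ T = Set.univ

/-- Translation of a pattern by `t`. -/
def patTrans (t : Pt d) (M : Set (Set (Pt d))) : Set (Set (Pt d)) :=
  (fun m => (fun x => x + t) '' m) '' M

/-- Support (underlying set) of a pattern. -/
def supp (M : Set (Set (Pt d))) : Set (Pt d) := ⋃₀ M

/-- Inner radius: the largest `r` such that some closed ball of radius `r` fits inside `s(M)`. -/
def rIn (M : Set (Set (Pt d))) : ℝ :=
  sSup {r : ℝ | ∃ x : Pt d, Metric.closedBall x r ⊆ supp d M}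

/-- Outer radius: the smallest `r` such that some closed ball of radius `r` contains `s(M)`. -/
def rOut (M : Set (Set (Pt d))) : ℝ :=
  sInf {r : ℝ | ∃ x : Pt d, supp d M ⊆ Metric.closedBall x r}

/-- The pattern class of `P` is a subpattern of (the class of) `Q`:
some translate of `P` is contained in `Q`. -/
def SubpatternClass (P Q : Set (Set (Pt d))) : Prop :=
  ∃ t : Pt d, patTrans d t P ⊆ Q

/-- A set of abstract patterns is modelled as a translation-closed set `Ps` of concrete
patterns (the union of the pattern classes).  `Admissible` encodes conditions
(i)–(iii) of Definition 2.1. -/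
structure Admissible (Ps : Set (Set (Set (Pt d)))) : Prop where
  pattern : ∀ P ∈ Ps, IsPattern d P
  transClosed : ∀ (t : Pt d), ∀ P ∈ Ps, patTrans d t P ∈ Ps
  subClosed : ∀ P ∈ Ps, ∀ Q : Set (Set (Pt d)), IsPattern d Q → Q ⊆ P → Q ∈ Ps
  tileBounds : ∃ rmin rmax : ℝ, 0 < rmin ∧ rmin ≤ rmax ∧
    ∀ m : Set (Pt d), ({m} : Set (Set (Pt d))) ∈ Ps →
      rmin ≤ rIn d {m} ∧ rIn d {m} ≤ rOut d {m} ∧ rOut d {m} ≤ rmax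
  extend : ∀ P ∈ Ps, (0 : Pt d) ∈ supp d P → ∀ r : ℝ, 0 < r →
    ∃ Q ∈ Ps, P ⊆ Q ∧ Metric.closedBall (0 : Pt d) r ⊆ supp d Q

/-- Linear repetitivity of a (translation-closed) set of patterns. -/
def LinearlyRepetitive (Ps : Set (Set (Set (Pt d)))) : Prop :=
  ∃ c : ℝ, 0 < c ∧ ∀ P ∈ Ps, 1 ≤ rOut d P →
    ∀ Q ∈ Ps, c * rOut d P ≤ rIn d Q → SubpatternClass d P Q

/-- The box determined by corner functions `a b : Fin d → ℝ`. -/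
def boxSet (a b : Fin d → ℝ) : Set (Pt d) := {x | ∀ j, x j ∈ Set.Icc (a j) (b j)}

/-- `B` is a box. -/
def IsBox (B : Set (Pt d)) : Prop :=
  ∃ a b : Fin d → ℝ, (∀ j, a j < b j) ∧ B = boxSet d a b

/-- `B` is an `r`-box: all side lengths lie in `[r, 2r]`. -/
def IsRBox (r : ℝ) (B : Set (Pt d)) : Prop :=
  ∃ a b : Fin d → ℝ, (∀ j, a j < b j) ∧ B = boxSet d a b ∧
    ∀ j, r ≤ b j - a j ∧ b j - a j ≤ 2 * r

/-- Width of a box: the minimum of its side lengths. -/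
def widthOf (B : Set (Pt d)) : ℝ :=
  ⨅ j : Fin d, (sSup ((fun x : Pt d => x j) '' B) - sInf ((fun x : Pt d => x j) '' B))

/-- Volume of a subset of `ℝ^d`. -/
def volOf (B : Set (Pt d)) : ℝ := (volume B).toReal

/-- Restriction `M ∩ B` of a pattern or tiling `M` to `B`. -/
def patRestrict (M : Set (Set (Pt d))) (B : Set (Pt d)) : Set (Set (Pt d)) :=
  {s | ∃ m ∈ M, (m ∩ interior B).Nonempty ∧ s = m ∩ B}

/-- The set `Ps_B` of box-patterns derived from `Ps` (concrete representatives). -/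
def BoxPatterns (Ps : Set (Set (Set (Pt d)))) : Set (Set (Set (Pt d))) :=
  {Q | ∃ P ∈ Ps, ∃ B : Set (Pt d), IsBox d B ∧ B ⊆ supp d P ∧ Q = patRestrict d P B}

/-- The set `Ps(r)` of `r`-patterns derived from `Ps`. -/
def RPatterns (Ps : Set (Set (Set (Pt d)))) (r : ℝ) : Set (Set (Set (Pt d))) :=
  {Q | ∃ P ∈ Ps, ∃ B : Set (Pt d), IsRBox d r B ∧ B ⊆ supp d P ∧ Q = patRestrict d P B}

/-- Width of a box-pattern. -/
def patWidth (M : Set (Set (Pt d))) : ℝ := widthOf d (supp d M)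

/-- Volume of a box-pattern. -/
def patVol (M : Set (Set (Pt d))) : ℝ := volOf d (supp d M)

/-- A subadditive function on `Ps_B`, with constants `dF, rF` and error function `cF`.
`F` is defined on concrete patterns and is translation-invariant (i.e. well defined on
pattern classes). -/
structure SubadditiveOn (Ps : Set (Set (Set (Pt d)))) (F : Set (Set (Pt d)) → ℝ)
    (dF rF : ℝ) (cF : ℝ → ℝ) : Prop where
  invariant : ∀ (t : Pt d), ∀ M ∈ BoxPatterns d Ps, F (patTrans d t M) = F M
  dF_nonneg : 0 ≤ dF
  rF_nonneg : 0 ≤ rF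
  cF_anti : ∀ r s : ℝ, rF ≤ r → r ≤ s → cF s ≤ cF r
  cF_lim : Tendsto cF atTop (nhds 0)
  subadd : ∀ M ∈ BoxPatterns d Ps, ∀ (n : ℕ) (Bj : Fin n → Set (Pt d)),
    (∀ j, IsBox d (Bj j)) →
    (∀ i j, i ≠ j → interior (Bj i) ∩ interior (Bj j) = ∅) →
    (⋃ j, Bj j) = supp d M →
    (∀ j, rF ≤ widthOf d (Bj j)) →
    F M ≤ (∑ j, F (patRestrict d M (Bj j))) +
      ∑ j, cF (widthOf d (Bj j)) * volOf d (Bj j)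
  bound : ∀ M ∈ BoxPatterns d Ps, |F M| ≤ dF * patVol d M

/-- The upper mean `F⁺(r)`. -/
def Fplus (Ps : Set (Set (Set (Pt d)))) (F : Set (Set (Pt d)) → ℝ) (r : ℝ) : ℝ :=
  sSup ((fun P => F P / patVol d P) '' RPatterns d Ps r)

/-- The lower mean `F⁻(r)`. -/
def Fminus (Ps : Set (Set (Set (Pt d)))) (F : Set (Set (Pt d)) → ℝ) (r : ℝ) : ℝ :=
  sInf ((fun P => F P / patVol d P) '' RPatterns d Ps r)


/-- The set `𝒫(T)` of pattern classes of finite subpatterns of a tiling `T`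
(as a translation-closed set of concrete patterns). -/
def patternClassesOf (T : Set (Set (Pt d))) : Set (Set (Set (Pt d))) :=
  {M | IsPattern d M ∧ ∃ t : Pt d, patTrans d t M ⊆ T}

/-- A subadditive function on the boxes of `ℝ^d`, with constants `dw, rw` and error
function `cw`. -/
def BoxFnSubadditive (w : Set (Pt d) → ℝ) (dw rw : ℝ) (cw : ℝ → ℝ) : Prop :=
  0 ≤ dw ∧ 0 ≤ rw ∧ (∀ r s : ℝ, rw ≤ r → r ≤ s → cw s ≤ cw r) ∧
    Tendsto cw atTop (nhds 0) ∧
    (∀ (B : Set (Pt d)) (n : ℕ) (Bj : Fin n → Set (Pt d)),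
      IsBox d B → (∀ j, IsBox d (Bj j)) →
      (∀ i j, i ≠ j → interior (Bj i) ∩ interior (Bj j) = ∅) →
      (⋃ j, Bj j) = B → (∀ j, rw ≤ widthOf d (Bj j)) →
      w B ≤ (∑ j, w (Bj j)) + ∑ j, cw (widthOf d (Bj j)) * volOf d (Bj j)) ∧
    (∀ B : Set (Pt d), IsBox d B → |w B| ≤ dw * volOf d B)

/-- Asymptotic `T`-invariance of a function on boxes: if the pattern `T ∩ B`
translated by `t` equals `T ∩ (B + t)`, then `w(B)` and `w(B+t)` differ by at most
`e_w(ω(B))·|B|`. -/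
def AsympTilingInvariant (T : Set (Set (Pt d))) (w : Set (Pt d) → ℝ)
    (rw : ℝ) (ew : ℝ → ℝ) : Prop :=
  (∀ r s : ℝ, rw ≤ r → r ≤ s → ew s ≤ ew r) ∧ Tendsto ew atTop (nhds 0) ∧
    ∀ (B : Set (Pt d)) (t : Pt d), IsBox d B → rw ≤ widthOf d B →
      patTrans d t (patRestrict d T B) = patRestrict d T ((fun x => x + t) '' B) →
      |w B - w ((fun x => x + t) '' B)| ≤ ew (widthOf d B) * volOf d B

/-!
The limit is the limsup `L` of the means `w B / |B|` over larger and larger `r`-boxes `B`. Suppose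
that for arbitrarily large `r` some `r`-box `B` has mean at most `L - ε`. Linear repetitivity puts
a translate of the pattern `T ∩ B` into every box whose sides are at least `C r`, and by asymptotic
invariance `w` takes almost the same value there. The translate occupies a fixed proportion of every
box of size comparable to `C r`, and subadditivity bounds the mean over the remaining part by
roughly `L`. So all boxes at that scale, and by subadditivity all larger boxes, have mean at most
`L - δ`, where `δ > 0` depends only on `ε`, `C` and `d`. This contradicts the choice of `L`.
-/

variable {d}

section Boxes

variable {a b a' b' : Fin d → ℝ} {r s : ℝ} {B : Set (Pt d)}

lemma boxSet_eq_preimage_Icc (a b : Fin d → ℝ) : boxSet d a b = WithLp.ofLp ⁻¹' Icc a b := by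
  ext x
  simp [boxSet, Pi.le_def, forall_and]

lemma volOf_boxSet (hab : ∀ j, a j ≤ b j) : volOf d (boxSet d a b) = ∏ j, (b j - a j) := by
  rw [volOf, boxSet_eq_preimage_Icc, (PiLp.volume_preserving_ofLp (Fin d)).measure_preimage
    measurableSet_Icc.nullMeasurableSet, Real.volume_Icc_pi_toReal hab]

lemma volOf_nonneg (B : Set (Pt d)) : 0 ≤ volOf d B :=
  ENNReal.toReal_nonneg

lemma IsBox.volOf_pos (hB : IsBox d B) : 0 < volOf d B := by
  obtain ⟨a, b, hab, rfl⟩ := hB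
  rw [volOf_boxSet fun j => (hab j).le]
  exact Finset.prod_pos fun j _ => sub_pos.2 (hab j)

lemma volOf_image_add_right (t : Pt d) (B : Set (Pt d)) :
    volOf d ((fun x => x + t) '' B) = volOf d B := by
  simp [volOf, Set.image_add_right]

lemma interior_boxSet (a b : Fin d → ℝ) :
    interior (boxSet d a b) = {x | ∀ j, x j ∈ Ioo (a j) (b j)} := by
  have hcoe : ⇑(PiLp.homeomorph 2 fun _ : Fin d => ℝ) = WithLp.ofLp := rfl
  rw [boxSet_eq_preimage_Icc, ← hcoe, ← Homeomorph.preimage_interior, ← pi_univ_Icc,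
    interior_pi_set finite_univ]
  ext x
  simp

lemma image_add_right_boxSet (a b : Fin d → ℝ) (t : Pt d) :
    (fun x => x + t) '' boxSet d a b = boxSet d (fun j => a j + t j) (fun j => b j + t j) := by
  ext y
  simp [boxSet, Set.image_add_right, ← sub_eq_add_neg, le_sub_iff_add_le]

lemma boxSet_subset_boxSet_iff (h : ∀ j, a' j ≤ b' j) :
    boxSet d a' b' ⊆ boxSet d a b ↔ (∀ j, a j ≤ a' j) ∧ ∀ j, b' j ≤ b j := by
  rw [boxSet_eq_preimage_Icc, boxSet_eq_preimage_Icc,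
    (WithLp.ofLp_surjective 2).preimage_subset_preimage_iff, Icc_subset_Icc_iff h,
    Pi.le_def, Pi.le_def]

lemma image_eval_boxSet (hab : ∀ j, a j ≤ b j) (j : Fin d) :
    (fun x : Pt d => x j) '' boxSet d a b = Icc (a j) (b j) := by
  have hcomp : (fun x : Pt d => x j) = Function.eval j ∘ WithLp.ofLp := rfl
  rw [hcomp, image_comp, boxSet_eq_preimage_Icc, image_preimage_eq _ (WithLp.ofLp_surjective 2),
    ← pi_univ_Icc, eval_image_univ_pi]
  exact univ_pi_nonempty_iff.2 fun j => nonempty_Icc.2 (hab j)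

lemma le_widthOf_boxSet [NeZero d] (hab : ∀ j, a j ≤ b j) (h : ∀ j, r ≤ b j - a j) :
    r ≤ widthOf d (boxSet d a b) :=
  le_ciInf fun j => by
    rw [image_eval_boxSet hab, csSup_Icc (hab j), csInf_Icc (hab j)]
    exact h j

lemma boxSet_subset_closedBall (hs : 0 ≤ s) (h : ∀ j, b j - a j ≤ s) :
    boxSet d a b ⊆ closedBall (WithLp.toLp 2 a) (√d * s) := by
  intro x hx
  have hcoord : ∀ j, dist (x j) (a j) ^ 2 ≤ s ^ 2 := fun j => by
    have := hx j
    rw [Real.dist_eq, abs_of_nonneg (by linarith [this.1])]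
    exact pow_le_pow_left₀ (by linarith [this.1]) (by linarith [this.2, h j]) 2
  calc dist x (WithLp.toLp 2 a) = √(∑ j, dist (x j) (a j) ^ 2) := EuclideanSpace.dist_eq _ _
    _ ≤ √(∑ _j : Fin d, s ^ 2) := Real.sqrt_le_sqrt (Finset.sum_le_sum fun j _ => hcoord j)
    _ = √d * s := by simp [Real.sqrt_sq hs]

lemma exists_closedBall_subset_boxSet (h : ∀ j, 2 * s ≤ b j - a j) :
    ∃ y : Pt d, closedBall y s ⊆ boxSet d a b := by
  refine ⟨WithLp.toLp 2 fun j => (a j + b j) / 2, fun x hx j => ?_⟩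
  have hcoord := (PiLp.norm_apply_le (x - WithLp.toLp 2 fun j => (a j + b j) / 2) j).trans
    (mem_closedBall_iff_norm.1 hx)
  rw [PiLp.sub_apply, Real.norm_eq_abs, abs_le] at hcoord
  constructor <;> linarith [h j]

lemma IsBox.eq_univ {B : Set (Pt 0)} (hB : IsBox 0 B) : B = univ := by
  obtain ⟨a, b, -, rfl⟩ := hB
  exact eq_univ_of_forall fun _ j => j.elim0

lemma IsRBox.isBox (hB : IsRBox d r B) : IsBox d B := by
  obtain ⟨a, b, hab, rfl, -⟩ := hB
  exact ⟨a, b, hab, rfl⟩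

lemma isRBox_boxSet (hr : 0 < r) (h : ∀ j, b j - a j ∈ Icc r (2 * r)) :
    IsRBox d r (boxSet d a b) :=
  ⟨a, b, fun j => by linarith [(h j).1], rfl, h⟩

lemma IsRBox.le_widthOf [NeZero d] (hB : IsRBox d r B) : r ≤ widthOf d B := by
  obtain ⟨a, b, hab, rfl, h⟩ := hB
  exact le_widthOf_boxSet (fun j => (hab j).le) fun j => (h j).1

lemma IsRBox.pow_le_volOf (hr : 0 ≤ r) (hB : IsRBox d r B) : r ^ d ≤ volOf d B := by
  obtain ⟨a, b, hab, rfl, h⟩ := hB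
  calc r ^ d = ∏ _j : Fin d, r := by simp
    _ ≤ ∏ j, (b j - a j) := Finset.prod_le_prod (fun _ _ => hr) fun j _ => (h j).1
    _ = volOf d (boxSet d a b) := (volOf_boxSet fun j => (hab j).le).symm

lemma IsRBox.volOf_le_pow (hB : IsRBox d r B) : volOf d B ≤ (2 * r) ^ d := by
  obtain ⟨a, b, hab, rfl, h⟩ := hB
  calc volOf d (boxSet d a b) = ∏ j, (b j - a j) := volOf_boxSet fun j => (hab j).le
    _ ≤ ∏ _j : Fin d, 2 * r :=
      Finset.prod_le_prod (fun j _ => (sub_pos.2 (hab j)).le) fun j _ => (h j).2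
    _ = (2 * r) ^ d := by simp

lemma IsRBox.volOf_le_mul_volOf {c : ℝ} {A : Set (Pt d)} (hr : 0 ≤ r) (hc : 0 ≤ c)
    (hB : IsRBox d r B) (hA : IsRBox d (c * r) A) : volOf d A ≤ (2 * c) ^ d * volOf d B :=
  calc volOf d A ≤ (2 * (c * r)) ^ d := hA.volOf_le_pow
    _ = (2 * c) ^ d * r ^ d := by rw [← mul_assoc, mul_pow]
    _ ≤ (2 * c) ^ d * volOf d B := by gcongr; exact hB.pow_le_volOf hr

end Boxes

section Grids

/-- The cell with index `p` of the rectangular grid in `ℝ^d` whose knots on the `j`-th axis are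
`x j 0, x j 1, x j 2, …`. Indices and knots run over all of `ℕ`; a finite grid is obtained by
restricting `p j` to `Fin (n j)`. -/
def gridCell (x : Fin d → ℕ → ℝ) (p : Fin d → ℕ) : Set (Pt d) :=
  boxSet d (fun j => x j (p j)) (fun j => x j (p j + 1))

variable {x : Fin d → ℕ → ℝ} {n : Fin d → ℕ}

lemma interior_gridCell_inter_interior_gridCell (hx : ∀ j, Monotone (x j)) {p q : Fin d → ℕ}
    (hpq : p ≠ q) : interior (gridCell x p) ∩ interior (gridCell x q) = ∅ := by
  obtain ⟨j, hj⟩ := Function.ne_iff.1 hpq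
  simp only [gridCell, interior_boxSet]
  refine eq_empty_of_forall_notMem fun y ⟨hyp, hyq⟩ => ?_
  exact disjoint_left.1 ((hx j).pairwise_disjoint_on_Ioo_succ hj) (hyp j) (hyq j)

lemma exists_mem_Icc_succ {α : Type*} [LinearOrder α] {x : ℕ → α} {n : ℕ} {y : α} (hn : n ≠ 0)
    (hy : y ∈ Icc (x 0) (x n)) : ∃ k < n, y ∈ Icc (x k) (x (k + 1)) := by
  induction n with
  | zero => exact absurd rfl hn
  | succ n ih =>
    rcases le_or_gt (x n) y with hny | hyn
    · exact ⟨n, n.lt_succ_self, hny, hy.2⟩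
    · have hn₀ : n ≠ 0 := by
        rintro rfl
        exact hyn.not_ge hy.1
      obtain ⟨k, hk, hyk⟩ := ih hn₀ ⟨hy.1, hyn.le⟩
      exact ⟨k, hk.trans n.lt_succ_self, hyk⟩

lemma iUnion_gridCell (hx : ∀ j, Monotone (x j)) (hn : ∀ j, n j ≠ 0) :
    ⋃ p : ∀ j, Fin (n j), gridCell x (fun j => p j) =
      boxSet d (fun j => x j 0) (fun j => x j (n j)) := by
  refine Subset.antisymm (iUnion_subset fun p y hy j => ?_) fun y hy => ?_
  · exact ⟨(hx j (Nat.zero_le _)).trans (hy j).1, (hy j).2.trans (hx j (p j).2)⟩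
  · choose k hk hyk using fun j => exists_mem_Icc_succ (hn j) (hy j)
    exact mem_iUnion.2 ⟨fun j => ⟨k j, hk j⟩, hyk⟩

lemma sum_volOf_gridCell (hx : ∀ j, Monotone (x j)) :
    ∑ p : ∀ j, Fin (n j), volOf d (gridCell x (fun j => p j)) =
      volOf d (boxSet d (fun j => x j 0) (fun j => x j (n j))) := by
  calc ∑ p : ∀ j, Fin (n j), volOf d (gridCell x (fun j => p j))
      = ∑ p : ∀ j, Fin (n j), ∏ j, (x j (p j + 1) - x j (p j)) :=
        Finset.sum_congr rfl fun p _ => volOf_boxSet fun j => hx j (Nat.le_succ _)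
    _ = ∏ j, ∑ k : Fin (n j), (x j (k + 1) - x j k) := by
        rw [Finset.prod_univ_sum, Fintype.piFinset_univ]
    _ = ∏ j, (x j (n j) - x j 0) := by
        refine Finset.prod_congr rfl fun j _ => ?_
        rw [← Finset.sum_range_sub (x j), Finset.sum_range]
    _ = volOf d (boxSet d (fun j => x j 0) (fun j => x j (n j))) :=
        (volOf_boxSet fun j => hx j (Nat.zero_le _)).symm

lemma exists_div_natCast_mem_Icc {r l : ℝ} (hr : 0 < r) (hl : r ≤ l) :
    ∃ n : ℕ, n ≠ 0 ∧ l / n ∈ Icc r (2 * r) := by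
  have hone : 1 ≤ ⌊l / r⌋₊ := Nat.one_le_floor_iff _ |>.2 ((one_le_div hr).2 hl)
  have hone' : (1 : ℝ) ≤ ⌊l / r⌋₊ := by exact_mod_cast hone
  have hle : ⌊l / r⌋₊ * r ≤ l :=
    (le_div_iff₀ hr).1 (Nat.floor_le (div_nonneg (hr.le.trans hl) hr.le))
  have hlt : l < (⌊l / r⌋₊ + 1) * r := (div_lt_iff₀ hr).1 (Nat.lt_floor_add_one _)
  refine ⟨⌊l / r⌋₊, Nat.one_le_iff_ne_zero.1 hone, ?_, ?_⟩
  · rw [le_div_iff₀ (by positivity)]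
    linarith
  · rw [div_le_iff₀ (by positivity)]
    nlinarith

/-- The knots `a, a', b', b` of a subdivision of `[a, b]` around the subinterval `[a', b']`,
continued by `b`. -/
def splitKnots (a a' b' b : ℝ) : ℕ → ℝ
  | 0 => a
  | 1 => a'
  | 2 => b'
  | _ => b

lemma monotone_splitKnots {a a' b' b : ℝ} (ha : a ≤ a') (hab : a' ≤ b') (hb : b' ≤ b) :
    Monotone (splitKnots a a' b' b) :=
  monotone_nat_of_le_succ fun
    | 0 => ha
    | 1 => hab
    | 2 => hb
    | _ + 3 => le_rfl

end Grids

namespace BoxFnSubadditive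

variable {w : Set (Pt d) → ℝ} {dw rw : ℝ} {cw : ℝ → ℝ} {r K : ℝ} {a b a' b' : Fin d → ℝ}

lemma apply_le_sum {ι : Type*} [Fintype ι] (hw : BoxFnSubadditive d w dw rw cw) (hr : rw ≤ r)
    {B : Set (Pt d)} (hB : IsBox d B) {C : ι → Set (Pt d)} (hC : ∀ i, IsBox d (C i))
    (hdisj : ∀ i k, i ≠ k → interior (C i) ∩ interior (C k) = ∅) (hcover : ⋃ i, C i = B)
    (hwidth : ∀ i, r ≤ widthOf d (C i)) :
    w B ≤ ∑ i, w (C i) + cw r * ∑ i, volOf d (C i) := by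
  obtain ⟨-, -, hanti, -, hsub, -⟩ := hw
  let e := (Fintype.equivFin ι).symm
  have hle := hsub B _ (C ∘ e) hB (fun i => hC _) (fun i k hik => hdisj _ _ (e.injective.ne hik))
    ((e.surjective.iUnion_comp C).trans hcover) fun i => hr.trans (hwidth _)
  have herr : ∑ i, cw (widthOf d (C i)) * volOf d (C i) ≤ cw r * ∑ i, volOf d (C i) := by
    rw [Finset.mul_sum]
    exact Finset.sum_le_sum fun i _ =>
      mul_le_mul_of_nonneg_right (hanti _ _ hr (hwidth i)) (volOf_nonneg _)
  rw [← e.sum_comp] at herr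
  rw [← e.sum_comp]
  exact hle.trans (add_le_add_right herr _)

lemma apply_le_sum_gridCell [NeZero d] (hw : BoxFnSubadditive d w dw rw cw) (hr : 0 < r)
    (hrw : rw ≤ r) {x : Fin d → ℕ → ℝ} (hx : ∀ j, Monotone (x j)) {n : Fin d → ℕ}
    (hn : ∀ j, n j ≠ 0) (hgap : ∀ j, ∀ k < n j, r ≤ x j (k + 1) - x j k) :
    w (boxSet d (fun j => x j 0) (fun j => x j (n j))) ≤
      ∑ p : ∀ j, Fin (n j), w (gridCell x (fun j => p j)) +
        cw r * volOf d (boxSet d (fun j => x j 0) (fun j => x j (n j))) := by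
  have hlt : ∀ j, ∀ k < n j, x j k < x j (k + 1) := fun j k hk => by linarith [hgap j k hk]
  rw [← sum_volOf_gridCell hx]
  refine hw.apply_le_sum hrw ⟨_, _, fun j => ?_, rfl⟩ (fun p => ⟨_, _, fun j => ?_, rfl⟩)
    (fun p q hpq => ?_) (iUnion_gridCell hx hn) fun p => ?_
  · exact (hlt j 0 (hn j).pos).trans_le (hx j (hn j).pos)
  · exact hlt j _ (p j).2
  · refine interior_gridCell_inter_interior_gridCell hx fun h => hpq ?_
    exact funext fun j => Fin.ext (congrFun h j)
  · exact le_widthOf_boxSet (fun j => (hlt j _ (p j).2).le) fun j => hgap j _ (p j).2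

lemma apply_le_of_forall_isRBox [NeZero d] (hw : BoxFnSubadditive d w dw rw cw) (hr : 0 < r)
    (hrw : rw ≤ r) (hK : ∀ B, IsRBox d r B → w B ≤ K * volOf d B) (hab : ∀ j, r ≤ b j - a j) :
    w (boxSet d a b) ≤ (K + cw r) * volOf d (boxSet d a b) := by
  choose n hn hlen using fun j => exists_div_natCast_mem_Icc hr (hab j)
  let x : Fin d → ℕ → ℝ := fun j k => a j + k * ((b j - a j) / n j)
  have hgap : ∀ j k, x j (k + 1) - x j k = (b j - a j) / n j := fun j k => by
    simp only [x]
    push_cast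
    ring
  have hx : ∀ j, Monotone (x j) := fun j =>
    monotone_nat_of_le_succ fun k => by linarith [hgap j k, (hlen j).1]
  have hx₀ : (fun j => x j 0) = a := by simp [x]
  have hxn : (fun j => x j (n j)) = b := by
    funext j
    simp [x, mul_div_cancel₀ _ (Nat.cast_ne_zero (R := ℝ).2 (hn j))]
  have hgrid := hw.apply_le_sum_gridCell hr hrw hx hn fun j k _ => (hlen j).1.trans_eq
    (hgap j k).symm
  have hvol := sum_volOf_gridCell (n := n) hx
  rw [hx₀, hxn] at hgrid hvol
  calc w (boxSet d a b)
      ≤ ∑ p : ∀ j, Fin (n j), w (gridCell x (fun j => p j)) + cw r * volOf d (boxSet d a b) := hgrid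
    _ ≤ ∑ p : ∀ j, Fin (n j), K * volOf d (gridCell x (fun j => p j)) +
          cw r * volOf d (boxSet d a b) := by
        gcongr with p
        exact hK _ (isRBox_boxSet hr fun j => (hgap j (p j)).symm ▸ hlen j)
    _ = (K + cw r) * volOf d (boxSet d a b) := by
        rw [← Finset.mul_sum, hvol]
        ring

lemma apply_le_add_excess_subbox [NeZero d] (hw : BoxFnSubadditive d w dw rw cw) (hr : 0 < r)
    (hrw : rw ≤ r)
    (hK : ∀ a b, (∀ j, r ≤ b j - a j) → w (boxSet d a b) ≤ K * volOf d (boxSet d a b))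
    (ha : ∀ j, r ≤ a' j - a j) (hab : ∀ j, r ≤ b' j - a' j) (hb : ∀ j, r ≤ b j - b' j) :
    w (boxSet d a b) ≤ (K + cw r) * volOf d (boxSet d a b) +
      (w (boxSet d a' b') - K * volOf d (boxSet d a' b')) := by
  let x : Fin d → ℕ → ℝ := fun j => splitKnots (a j) (a' j) (b' j) (b j)
  have hx : ∀ j, Monotone (x j) := fun j =>
    monotone_splitKnots (by linarith [ha j]) (by linarith [hab j]) (by linarith [hb j])
  have hgap : ∀ j, ∀ k < 3, r ≤ x j (k + 1) - x j k
    | j, 0, _ => ha j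
    | j, 1, _ => hab j
    | j, 2, _ => hb j
  have hcell : ∀ p : Fin d → Fin 3,
      w (gridCell x (fun j => p j)) - K * volOf d (gridCell x (fun j => p j)) ≤ 0 := fun p =>
    sub_nonpos.2 (hK _ _ fun j => hgap j _ (p j).2)
  have hgrid := hw.apply_le_sum_gridCell (n := fun _ => 3) hr hrw hx (fun _ => by simp) hgap
  have hvol : ∑ p : Fin d → Fin 3, volOf d (gridCell x (fun j => p j)) = volOf d (boxSet d a b) :=
    sum_volOf_gridCell (n := fun _ => 3) hx
  calc w (boxSet d a b)
      ≤ ∑ p : Fin d → Fin 3, w (gridCell x (fun j => p j)) + cw r * volOf d (boxSet d a b) := hgrid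
    _ = (K + cw r) * volOf d (boxSet d a b) + ∑ p : Fin d → Fin 3,
          (w (gridCell x (fun j => p j)) - K * volOf d (gridCell x (fun j => p j))) := by
        rw [Finset.sum_sub_distrib, ← Finset.mul_sum, hvol]
        ring
    _ ≤ (K + cw r) * volOf d (boxSet d a b) +
          (w (boxSet d a' b') - K * volOf d (boxSet d a' b')) := by
        gcongr
        rw [Fintype.sum_eq_add_sum_compl fun _ => 1]
        exact add_le_of_nonpos_right (Finset.sum_nonpos fun p _ => hcell p)

end BoxFnSubadditive

section LargeBoxes

/-- The filter of large boxes of bounded eccentricity: a property holds eventually along it if, for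
all large `r`, it holds for every `r`-box. Convergence along it is the convergence along all
sequences of `r_n`-boxes with `r_n → ∞`, uniformly in the sequence. -/
def largeRBoxes (d : ℕ) : Filter (Set (Pt d)) :=
  atTop.bind fun r : ℝ => 𝓟 {B | IsRBox d r B}

lemma eventually_largeRBoxes {p : Set (Pt d) → Prop} :
    (∀ᶠ B in largeRBoxes d, p B) ↔ ∀ᶠ r in atTop, ∀ B, IsRBox d r B → p B :=
  Iff.rfl

lemma frequently_largeRBoxes {p : Set (Pt d) → Prop} :
    (∃ᶠ B in largeRBoxes d, p B) ↔ ∃ᶠ r in atTop, ∃ B, IsRBox d r B ∧ p B := by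
  simp [Filter.Frequently, eventually_largeRBoxes]

instance largeRBoxes_neBot : NeBot (largeRBoxes d) := by
  refine frequently_true_iff_neBot _ |>.1 (frequently_largeRBoxes.2 (Eventually.frequently ?_))
  filter_upwards [eventually_gt_atTop 0] with r hr
  have hcube : ∀ j : Fin d, r - (0 : Fin d → ℝ) j ∈ Icc r (2 * r) := fun j => by
    simp only [Pi.zero_apply, sub_zero]
    exact ⟨le_rfl, by linarith⟩
  exact ⟨_, isRBox_boxSet (b := fun _ => r) hr hcube, trivial⟩

lemma tendsto_largeRBoxes {ι : Type*} {l : Filter ι} {B : ι → Set (Pt d)} {r : ι → ℝ}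
    (hB : ∀ i, IsRBox d (r i) (B i)) (hr : Tendsto r l atTop) : Tendsto B l (largeRBoxes d) :=
  fun _s hs => (hr.eventually (eventually_largeRBoxes.1 hs)).mono fun i hi => hi (B i) (hB i)

end LargeBoxes

section Recurrence

/-- Every box with side lengths at least `s` contains a translate of `B` at which `w` exceeds its
value at `B` by at most `η |B|`. -/
def HasAlmostCopies (w : Set (Pt d) → ℝ) (η s : ℝ) (B : Set (Pt d)) : Prop :=
  ∀ a b : Fin d → ℝ, (∀ j, s ≤ b j - a j) → ∃ t : Pt d,
    (fun x => x + t) '' B ⊆ boxSet d a b ∧ w ((fun x => x + t) '' B) ≤ w B + η * volOf d B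

/-- Linear repetitivity of a function on boxes, without reference to a tiling: up to an error that
is small compared to the volume, each large `r`-box recurs in every box of size `C r`. -/
def AlmostLinearlyRecurrent (w : Set (Pt d) → ℝ) : Prop :=
  ∃ C : ℝ, 0 < C ∧ ∀ η > 0, ∀ᶠ r in atTop, ∀ B, IsRBox d r B → HasAlmostCopies w η (C * r) B

end Recurrence

namespace BoxFnSubadditive

variable {w : Set (Pt d) → ℝ} {dw rw : ℝ} {cw : ℝ → ℝ} {r K C η σ : ℝ} {A B : Set (Pt d)}

lemma abs_div_volOf_le (hw : BoxFnSubadditive d w dw rw cw) (hB : IsBox d B) :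
    |w B / volOf d B| ≤ dw := by
  obtain ⟨-, -, -, -, -, hbound⟩ := hw
  rw [abs_div, abs_of_nonneg (volOf_nonneg B), div_le_iff₀ hB.volOf_pos]
  exact hbound B hB

lemma eventually_abs_div_volOf_le (hw : BoxFnSubadditive d w dw rw cw) :
    ∀ᶠ B in largeRBoxes d, |w B / volOf d B| ≤ dw :=
  eventually_largeRBoxes.2 (.of_forall fun _ _ hB => hw.abs_div_volOf_le hB.isBox)

lemma isBoundedUnder_le_div_volOf (hw : BoxFnSubadditive d w dw rw cw) :
    IsBoundedUnder (· ≤ ·) (largeRBoxes d) fun B => w B / volOf d B :=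
  isBoundedUnder_of_eventually_le (hw.eventually_abs_div_volOf_le.mono fun _ h => (abs_le.1 h).2)

lemma isBoundedUnder_ge_div_volOf (hw : BoxFnSubadditive d w dw rw cw) :
    IsBoundedUnder (· ≥ ·) (largeRBoxes d) fun B => w B / volOf d B :=
  isBoundedUnder_of_eventually_ge (hw.eventually_abs_div_volOf_le.mono fun _ h => (abs_le.1 h).1)

variable [NeZero d]

-- Cut `A` into a translate of `B` in its interior and boxes around it, whose means are at most
-- `K + η`. The translate occupies a fixed proportion of `A`.
lemma apply_le_of_hasAlmostCopies (hw : BoxFnSubadditive d w dw rw cw) (hr : 0 < r) (hrw : rw ≤ r)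
    (hη : cw r ≤ η) (hK : ∀ B, IsRBox d r B → w B ≤ K * volOf d B) (hC : 0 ≤ C) (hσ : 0 ≤ σ)
    (hB : IsRBox d r B) (hBσ : w B ≤ (K - σ) * volOf d B) (hcopies : HasAlmostCopies w η (C * r) B)
    (hA : IsRBox d ((C + 2) * r) A) :
    w A ≤ (K + 2 * η - σ / (2 * (C + 2)) ^ d) * volOf d A := by
  have hvol : volOf d A / (2 * (C + 2)) ^ d ≤ volOf d B :=
    div_le_of_le_mul₀ (by positivity) (volOf_nonneg B)
      ((hB.volOf_le_mul_volOf hr.le (by positivity) hA).trans_eq (mul_comm _ _))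
  obtain ⟨a, b, -, rfl, hab⟩ := hA
  obtain ⟨t, ht, hwt⟩ := hcopies (fun j => a j + r) (fun j => b j - r) fun j => by
    linarith [(hab j).1]
  have hvolt := volOf_image_add_right t B
  obtain ⟨a', b', hab', rfl, hlen'⟩ := hB
  rw [image_add_right_boxSet] at ht hwt hvolt
  obtain ⟨hat, hbt⟩ := (boxSet_subset_boxSet_iff fun j => by linarith [hab' j]).1 ht
  have hexcess := hw.apply_le_add_excess_subbox (K := K + η) (a := a) (b := b)
    (a' := fun j => a' j + t j) (b' := fun j => b' j + t j) hr hrw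
    (fun a b hab => (hw.apply_le_of_forall_isRBox hr hrw hK hab).trans
      (mul_le_mul_of_nonneg_right (by linarith) (volOf_nonneg _)))
    (fun j => by linarith [hat j]) (fun j => by linarith [(hlen' j).1])
    (fun j => by linarith [hbt j])
  rw [hvolt] at hexcess
  calc w (boxSet d a b)
      ≤ (K + η + cw r) * volOf d (boxSet d a b) - σ * volOf d (boxSet d a' b') := by linarith
    _ ≤ (K + η + η) * volOf d (boxSet d a b) -
          σ * (volOf d (boxSet d a b) / (2 * (C + 2)) ^ d) := by
        gcongr
        exact volOf_nonneg _
    _ = (K + 2 * η - σ / (2 * (C + 2)) ^ d) * volOf d (boxSet d a b) := by ring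

lemma eventually_div_volOf_le_of_hasAlmostCopies (hw : BoxFnSubadditive d w dw rw cw) (hr : 0 < r)
    (hrw : rw ≤ r) (hη : cw r ≤ η) (hK : ∀ B, IsRBox d r B → w B ≤ K * volOf d B) (hC : 0 ≤ C)
    (hσ : 0 ≤ σ) (hB : IsRBox d r B) (hBσ : w B ≤ (K - σ) * volOf d B)
    (hcopies : HasAlmostCopies w η (C * r) B) :
    ∀ᶠ A in largeRBoxes d, w A / volOf d A ≤ K + 3 * η - σ / (2 * (C + 2)) ^ d := by
  have hle : r ≤ (C + 2) * r := le_mul_of_one_le_left hr.le (by linarith)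
  have hη' : cw ((C + 2) * r) ≤ η := (hw.2.2.1 r _ hrw hle).trans hη
  refine eventually_largeRBoxes.2 ?_
  filter_upwards [eventually_ge_atTop ((C + 2) * r)] with s hs A hA
  have hvol := hA.isBox.volOf_pos
  obtain ⟨a, b, -, rfl, hab⟩ := hA
  have hA' := hw.apply_le_of_forall_isRBox (hr.trans_le hle) (hrw.trans hle)
    (fun A hA => hw.apply_le_of_hasAlmostCopies hr hrw hη hK hC hσ hB hBσ hcopies hA)
    fun j => hs.trans (hab j).1
  rw [div_le_iff₀ hvol]
  exact hA'.trans (mul_le_mul_of_nonneg_right (by linarith) hvol.le)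

lemma eventually_limsup_sub_le (hw : BoxFnSubadditive d w dw rw cw)
    (hrec : AlmostLinearlyRecurrent w) {ε : ℝ} (hε : 0 < ε) :
    ∀ᶠ B in largeRBoxes d,
      limsup (fun B => w B / volOf d B) (largeRBoxes d) - ε ≤ w B / volOf d B := by
  obtain ⟨C, hC, hcopies⟩ := hrec
  set L := limsup (fun B => w B / volOf d B) (largeRBoxes d)
  by_contra hcon
  obtain ⟨η, hη, hηε⟩ : ∃ η > 0, 5 * η = ε / (2 * (C + 2)) ^ d :=
    ⟨ε / (2 * (C + 2)) ^ d / 5, by positivity, by ring⟩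
  have hupper : ∀ᶠ r in atTop, ∀ B, IsRBox d r B → w B / volOf d B < L + η :=
    eventually_largeRBoxes.1
      (eventually_lt_of_limsup_lt (lt_add_of_pos_right L hη) hw.isBoundedUnder_le_div_volOf)
  have hbad : ∃ᶠ r in atTop, ∃ B, IsRBox d r B ∧ w B / volOf d B < L - ε :=
    frequently_largeRBoxes.1 ((not_eventually.1 hcon).mono fun _ => lt_of_not_ge)
  have hcw : ∀ᶠ r in atTop, cw r ≤ η := hw.2.2.2.1.eventually (eventually_le_nhds hη)
  obtain ⟨r, ⟨B, hB, hBL⟩, hr, hrw, hcwr, hK, hcopies⟩ :=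
    (hbad.and_eventually ((eventually_gt_atTop 0).and ((eventually_ge_atTop rw).and
      (hcw.and (hupper.and (hcopies η hη)))))).exists
  have hK' : ∀ B, IsRBox d r B → w B ≤ (L + η) * volOf d B := fun B hB =>
    ((div_lt_iff₀ hB.isBox.volOf_pos).1 (hK B hB)).le
  have hBσ : w B ≤ (L + η - ε) * volOf d B :=
    (div_le_iff₀ hB.isBox.volOf_pos).1 (by linarith)
  have hlimsup : L ≤ L + η + 3 * η - ε / (2 * (C + 2)) ^ d :=
    limsup_le_of_le hw.isBoundedUnder_ge_div_volOf.isCoboundedUnder_flip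
      (hw.eventually_div_volOf_le_of_hasAlmostCopies hr hrw hcwr hK' hC.le hε.le hB hBσ
        (hcopies B hB))
  linarith

theorem exists_tendsto_div_volOf (hw : BoxFnSubadditive d w dw rw cw)
    (hrec : AlmostLinearlyRecurrent w) :
    ∃ L, Tendsto (fun B => w B / volOf d B) (largeRBoxes d) (𝓝 L) := by
  refine ⟨limsup (fun B => w B / volOf d B) (largeRBoxes d), tendsto_of_le_liminf_of_limsup_le
    ?_ le_rfl hw.isBoundedUnder_le_div_volOf hw.isBoundedUnder_ge_div_volOf⟩
  refine le_of_forall_sub_le fun ε hε => ?_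
  exact le_liminf_of_le hw.isBoundedUnder_le_div_volOf.isCoboundedUnder_flip
    (hw.eventually_limsup_sub_le hrec hε)

end BoxFnSubadditive

section Radii

lemma le_of_closedBall_subset_closedBall {E : Type*} [NormedAddCommGroup E] [NormedSpace ℝ E]
    [Nontrivial E] {x y : E} {r s : ℝ} (hr : 0 ≤ r) (h : closedBall x r ⊆ closedBall y s) :
    r ≤ s := by
  have hs : 0 ≤ s := nonempty_closedBall.1 ((nonempty_closedBall.2 hr).mono h)
  have hdiam := diam_mono h isBounded_closedBall
  rw [diam_closedBall_eq _ hr, diam_closedBall_eq _ hs] at hdiam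
  linarith

variable {M : Set (Set (Pt d))} {s : ℝ} {x : Pt d}

lemma exists_closedBall_subset_supp (h : s < rIn d M) : ∃ x, closedBall x s ⊆ supp d M := by
  have hne : {r : ℝ | ∃ x : Pt d, closedBall x r ⊆ supp d M}.Nonempty := ⟨-1, 0, by simp⟩
  obtain ⟨r, ⟨x, hx⟩, hsr⟩ := exists_lt_of_lt_csSup hne h
  exact ⟨x, (closedBall_subset_closedBall hsr.le).trans hx⟩

lemma exists_supp_subset_closedBall (hM : Bornology.IsBounded (supp d M)) (h : rOut d M < s) :
    ∃ x, supp d M ⊆ closedBall x s := by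
  have hne : {r : ℝ | ∃ x : Pt d, supp d M ⊆ closedBall x r}.Nonempty :=
    (hM.subset_closedBall 0).imp fun _ hr => ⟨0, hr⟩
  obtain ⟨r, ⟨x, hx⟩, hrs⟩ := exists_lt_of_csInf_lt hne h
  exact ⟨x, hx.trans (closedBall_subset_closedBall hrs.le)⟩

lemma rOut_le (hM : (supp d M).Nonempty) (h : supp d M ⊆ closedBall x s) : rOut d M ≤ s :=
  csInf_le ⟨0, fun _ ⟨_, hy⟩ => nonempty_closedBall.1 (hM.mono hy)⟩ ⟨x, h⟩

variable [NeZero d]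

lemma le_rOut (hM : Bornology.IsBounded (supp d M)) (hs : 0 ≤ s)
    (h : closedBall x s ⊆ supp d M) : s ≤ rOut d M :=
  le_csInf ((hM.subset_closedBall 0).imp fun _ hr => ⟨0, hr⟩) fun _ ⟨_, hy⟩ =>
    le_of_closedBall_subset_closedBall hs (h.trans hy)

lemma le_rIn (hM : Bornology.IsBounded (supp d M)) (h : closedBall x s ⊆ supp d M) :
    s ≤ rIn d M := by
  obtain ⟨R, hR⟩ := hM.subset_closedBall 0
  refine le_csSup ⟨max R 0, fun r ⟨y, hy⟩ => ?_⟩ ⟨x, h⟩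
  rcases le_total r 0 with hr | hr
  · exact hr.trans (le_max_right R 0)
  · exact (le_of_closedBall_subset_closedBall hr (hy.trans hR)).trans (le_max_left R 0)

end Radii

section Translation

variable {M : Set (Set (Pt d))}

lemma patTrans_zero (M : Set (Set (Pt d))) : patTrans d 0 M = M := by
  simp [patTrans]

lemma supp_patTrans (t : Pt d) (M : Set (Set (Pt d))) :
    supp d (patTrans d t M) = (fun x => x + t) '' supp d M :=
  image_sUnion.symm

lemma patTrans_patRestrict (t : Pt d) (M : Set (Set (Pt d))) (B : Set (Pt d)) :
    patTrans d t (patRestrict d M B) =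
      patRestrict d (patTrans d t M) ((fun x => x + t) '' B) := by
  have hinj : Function.Injective fun x : Pt d => x + t := add_left_injective t
  have hint : interior ((fun x => x + t) '' B) = (fun x => x + t) '' interior B :=
    ((Homeomorph.addRight t).image_interior B).symm
  ext s
  constructor
  · rintro ⟨_, ⟨m, hm, hmB, rfl⟩, rfl⟩
    refine ⟨_, mem_image_of_mem _ hm, ?_, image_inter hinj⟩
    rw [hint, ← image_inter hinj]
    exact hmB.image _
  · rintro ⟨_, ⟨m, hm, rfl⟩, hmB, rfl⟩
    rw [hint, ← image_inter hinj, image_nonempty] at hmB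
    exact ⟨_, ⟨m, hm, hmB, rfl⟩, image_inter hinj⟩

lemma image_add_right_closedBall {E : Type*} [SeminormedAddCommGroup E] (t x : E) (r : ℝ) :
    (fun y => y + t) '' closedBall x r = closedBall (x + t) r :=
  (IsometryEquiv.addRight t).image_closedBall x r

end Translation

section Tilings

lemma finite_of_closedBall_subset_of_isBounded {E : Type*} [NormedAddCommGroup E]
    [NormedSpace ℝ E] [FiniteDimensional ℝ E] {S : Set (Set E)} {ε : ℝ} (hε : 0 < ε)
    (hdisj : S.Pairwise fun m m' => interior m ∩ interior m' = ∅)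
    (hball : ∀ m ∈ S, ∃ z, closedBall z ε ⊆ m) (hS : Bornology.IsBounded (⋃₀ S)) : S.Finite := by
  borelize E
  let μ : Measure E := Measure.addHaar
  have hmeas : ∀ m : S, μ (ball 0 ε) ≤ μ (interior (m : Set E)) := fun m => by
    obtain ⟨z, hz⟩ := hball m m.2
    rw [← Measure.addHaar_ball_center μ z]
    exact measure_mono (interior_maximal (ball_subset_closedBall.trans hz) isOpen_ball)
  have hunion : (⋃ m : S, interior (m : Set E)) ⊆ ⋃₀ S :=
    iUnion_subset fun m => interior_subset.trans (subset_sUnion_of_mem m.2)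
  have hfin := Measure.finite_const_le_meas_of_disjoint_iUnion μ (measure_ball_pos μ 0 hε)
    (fun m : S => isOpen_interior.measurableSet)
    (fun m m' hne => disjoint_iff_inter_eq_empty.2
      (hdisj m.2 m'.2 (Subtype.coe_injective.ne hne)))
    (hS.subset hunion).measure_lt_top.ne
  exact finite_coe_iff.1 (finite_univ_iff.1 (hfin.subset fun m _ => hmeas m))

/-- The tiles of `T` have diameter at most `D` and contain a ball of radius `ε > 0`. -/
structure HasUniformTiles (T : Set (Set (Pt d))) (D ε : ℝ) : Prop where
  diam_nonneg : 0 ≤ D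
  radius_pos : 0 < ε
  dist_le : ∀ m ∈ T, ∀ x ∈ m, ∀ y ∈ m, dist x y ≤ D
  exists_closedBall_subset : ∀ m ∈ T, ∃ z, closedBall z ε ⊆ m

/-- The patch of a tiling `T` formed by the tiles that meet the closed ball of radius `R`
about `x`. -/
def ballPatch (T : Set (Set (Pt d))) (x : Pt d) (R : ℝ) : Set (Set (Pt d)) :=
  {m ∈ T | (m ∩ closedBall x R).Nonempty}

variable {T P : Set (Set (Pt d))} {D ε R : ℝ} {x : Pt d} {m B : Set (Pt d)}

lemma IsTile.isCompact (hm : IsTile d m) : IsCompact m := by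
  obtain ⟨e⟩ := hm
  have : CompactSpace (closedBall (0 : Pt d) 1) :=
    isCompact_iff_compactSpace.1 (isCompact_closedBall _ _)
  exact isCompact_iff_compactSpace.2 e.symm.compactSpace

lemma IsTiling.singleton_mem_patternClassesOf (hT : IsTiling d T) (hm : m ∈ T) :
    {m} ∈ patternClassesOf d T :=
  ⟨⟨finite_singleton m, singleton_nonempty m, forall_eq.2 (hT.1 m hm), pairwise_singleton _ _⟩,
    0, by simpa [patTrans_zero]⟩

lemma IsTiling.exists_hasUniformTiles (hT : IsTiling d T)
    (hadm : Admissible d (patternClassesOf d T)) : ∃ D ε, HasUniformTiles T D ε := by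
  obtain ⟨rmin, rmax, hrmin, hrmax, hr⟩ := hadm.tileBounds
  have hsupp : ∀ m : Set (Pt d), supp d {m} = m := sUnion_singleton
  refine ⟨2 * (rmax + 1), rmin / 2, by linarith, half_pos hrmin,
    fun m hm x hx y hy => ?_, fun m hm => ?_⟩
  · have hrm := (hr m (hT.singleton_mem_patternClassesOf hm)).2.2
    obtain ⟨z, hz⟩ := exists_supp_subset_closedBall (M := {m}) (s := rmax + 1)
      (by simpa [hsupp] using (hT.1 m hm).isCompact.isBounded) (by linarith)
    rw [hsupp] at hz
    linarith [dist_triangle_right x y z, mem_closedBall.1 (hz hx), mem_closedBall.1 (hz hy)]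
  · have hrm := (hr m (hT.singleton_mem_patternClassesOf hm)).1
    simpa only [hsupp] using exists_closedBall_subset_supp (M := {m}) (s := rmin / 2) (by linarith)

lemma HasUniformTiles.subset_closedBall (htiles : HasUniformTiles T D ε) (hm : m ∈ T)
    (hmR : (m ∩ closedBall x R).Nonempty) : m ⊆ closedBall x (R + D) := by
  obtain ⟨z, hzm, hzx⟩ := hmR
  intro y hy
  rw [mem_closedBall] at hzx ⊢
  linarith [dist_triangle y z x, htiles.dist_le m hm y hy z hzm]

lemma IsTiling.closedBall_subset_supp_ballPatch (hT : IsTiling d T) (x : Pt d) (R : ℝ) :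
    closedBall x R ⊆ supp d (ballPatch T x R) := by
  intro y hy
  obtain ⟨m, hm, hym⟩ := hT.2.2.ge (mem_univ y)
  exact ⟨m, ⟨hm, y, hym, hy⟩, hym⟩

lemma HasUniformTiles.supp_ballPatch_subset (htiles : HasUniformTiles T D ε) (x : Pt d) (R : ℝ) :
    supp d (ballPatch T x R) ⊆ closedBall x (R + D) :=
  sUnion_subset fun _ hm => htiles.subset_closedBall hm.1 hm.2

lemma HasUniformTiles.isBounded_supp_ballPatch (htiles : HasUniformTiles T D ε) (x : Pt d)
    (R : ℝ) : Bornology.IsBounded (supp d (ballPatch T x R)) :=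
  isBounded_closedBall.subset (htiles.supp_ballPatch_subset x R)

lemma IsTiling.finite_ballPatch (hT : IsTiling d T) (htiles : HasUniformTiles T D ε) (x : Pt d)
    (R : ℝ) : (ballPatch T x R).Finite :=
  finite_of_closedBall_subset_of_isBounded htiles.radius_pos (hT.2.1.mono fun _ hm => hm.1)
    (fun m hm => htiles.exists_closedBall_subset m hm.1) (htiles.isBounded_supp_ballPatch x R)

lemma IsTiling.ballPatch_mem_patternClassesOf (hT : IsTiling d T)
    (htiles : HasUniformTiles T D ε) (x : Pt d) (hR : 0 ≤ R) :
    ballPatch T x R ∈ patternClassesOf d T := by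
  obtain ⟨m, hm, -⟩ := hT.closedBall_subset_supp_ballPatch x R (mem_closedBall_self hR)
  exact ⟨⟨hT.finite_ballPatch htiles x R, ⟨m, hm⟩, fun m hm => hT.1 m hm.1,
    hT.2.1.mono fun _ hm => hm.1⟩, 0, (patTrans_zero _).trans_subset fun _ hm => hm.1⟩

-- By the Baire category theorem the interior of `m` meets the interior of some tile in `P`.
lemma IsTiling.mem_of_subset_supp (hT : IsTiling d T) (hm : m ∈ T) (hne : (interior m).Nonempty)
    (hPT : P ⊆ T) (hP : P.Countable) (hmP : m ⊆ supp d P) : m ∈ P := by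
  have hclosed : ∀ k ∈ insert (interior m)ᶜ P, IsClosed k :=
    forall_mem_insert.2 ⟨isOpen_interior.isClosed_compl, fun k hk =>
      (hT.1 k (hPT hk)).isCompact.isClosed⟩
  have hcover : ⋃₀ insert (interior m)ᶜ P = univ := by
    rw [sUnion_insert, ← univ_subset_iff, ← compl_union_self (interior m)]
    exact union_subset_union_right _ (interior_subset.trans hmP)
  obtain ⟨y, hym, hy⟩ := (dense_sUnion_interior_of_closed hclosed (hP.insert _)
    hcover).inter_open_nonempty _ isOpen_interior hne
  obtain ⟨k, rfl | hk, hyk⟩ := mem_iUnion₂.1 hy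
  · exact absurd hym (interior_subset hyk)
  · by_contra hmP
    have hdisj := hT.2.1 hm (hPT hk) fun h => hmP (h ▸ hk)
    exact hdisj.le ⟨hym, hyk⟩

lemma IsTiling.patRestrict_eq_of_closedBall_subset_supp (hT : IsTiling d T)
    (htiles : HasUniformTiles T D ε) (hPT : P ⊆ T) (hP : P.Countable)
    (hball : closedBall x (R + D) ⊆ supp d P) (hB : B ⊆ closedBall x R) :
    patRestrict d T B = patRestrict d P B := by
  refine Subset.antisymm ?_ fun _ ⟨m, hm, hmB⟩ => ⟨m, hPT hm, hmB⟩
  rintro _ ⟨m, hm, hmB, rfl⟩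
  obtain ⟨z, hz⟩ := htiles.exists_closedBall_subset m hm
  have hne : (interior m).Nonempty :=
    ⟨z, mem_interior.2 ⟨ball z ε, ball_subset_closedBall.trans hz, isOpen_ball,
      mem_ball_self htiles.radius_pos⟩⟩
  have hmx : m ⊆ closedBall x (R + D) := htiles.subset_closedBall hm
    (hmB.mono (inter_subset_inter_right m (interior_subset.trans hB)))
  exact ⟨m, hT.mem_of_subset_supp hm hne hPT hP (hmx.trans hball), hmB, rfl⟩

lemma IsTiling.patTrans_patRestrict_eq (hT : IsTiling d T) (htiles : HasUniformTiles T D ε)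
    {t : Pt d} (ht : patTrans d t (ballPatch T x (R + D)) ⊆ T) (hB : B ⊆ closedBall x R) :
    patTrans d t (patRestrict d T B) = patRestrict d T ((fun y => y + t) '' B) := by
  have hP := (hT.finite_ballPatch htiles x (R + D)).countable
  have hcover := hT.closedBall_subset_supp_ballPatch x (R + D)
  have hcover' : closedBall (x + t) (R + D) ⊆ supp d (patTrans d t (ballPatch T x (R + D))) := by
    rw [supp_patTrans, ← image_add_right_closedBall]
    exact image_mono hcover
  have hB' : (fun y => y + t) '' B ⊆ closedBall (x + t) R :=
    (image_mono hB).trans_eq (image_add_right_closedBall t x R)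
  calc patTrans d t (patRestrict d T B)
      = patTrans d t (patRestrict d (ballPatch T x (R + D)) B) := by
        rw [hT.patRestrict_eq_of_closedBall_subset_supp htiles (fun _ hm => hm.1) hP hcover hB]
    _ = patRestrict d (patTrans d t (ballPatch T x (R + D))) ((fun y => y + t) '' B) :=
        patTrans_patRestrict t _ B
    _ = patRestrict d T ((fun y => y + t) '' B) :=
        (hT.patRestrict_eq_of_closedBall_subset_supp htiles ht (hP.image _) hcover' hB').symm

/-- The geometric content of linear repetitivity: for large `R`, what `T` looks like in a ball of
radius `R` recurs, up to translation, in every ball of radius `C R`. -/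
def LinearlyRecurrent (T : Set (Set (Pt d))) : Prop :=
  ∃ C : ℝ, 0 < C ∧ ∀ᶠ R in atTop, ∀ x y : Pt d, ∃ t : Pt d,
    closedBall (x + t) R ⊆ closedBall y (C * R) ∧ ∀ B ⊆ closedBall x R,
      patTrans d t (patRestrict d T B) = patRestrict d T ((fun z => z + t) '' B)

theorem LinearlyRepetitive.linearlyRecurrent [NeZero d]
    (hrep : LinearlyRepetitive d (patternClassesOf d T)) (hT : IsTiling d T)
    (htiles : HasUniformTiles T D ε) : LinearlyRecurrent T := by
  obtain ⟨c, hc, hsub⟩ := hrep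
  refine ⟨3 * c + 1, by linarith, ?_⟩
  filter_upwards [eventually_ge_atTop 1, eventually_ge_atTop D] with R hR hRD x y
  have hD := htiles.diam_nonneg
  have hP := hT.closedBall_subset_supp_ballPatch x (R + D)
  have hPle := htiles.supp_ballPatch_subset x (R + D)
  have hQ := htiles.supp_ballPatch_subset y (c * (3 * R))
  have hrOut : 1 ≤ rOut d (ballPatch T x (R + D)) :=
    le_rOut (htiles.isBounded_supp_ballPatch x _) zero_le_one
      ((closedBall_subset_closedBall (by linarith)).trans hP)
  have hrOut' : rOut d (ballPatch T x (R + D)) ≤ 3 * R :=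
    rOut_le ((nonempty_closedBall.2 (by linarith)).mono hP)
      (hPle.trans (closedBall_subset_closedBall (by linarith)))
  have hrIn : c * (3 * R) ≤ rIn d (ballPatch T y (c * (3 * R))) :=
    le_rIn (htiles.isBounded_supp_ballPatch y _) (hT.closedBall_subset_supp_ballPatch y _)
  obtain ⟨t, ht⟩ := hsub _ (hT.ballPatch_mem_patternClassesOf htiles x (by linarith)) hrOut
    _ (hT.ballPatch_mem_patternClassesOf htiles y (by positivity))
    ((mul_le_mul_of_nonneg_left hrOut' hc.le).trans hrIn)
  refine ⟨t, ?_, fun B => hT.patTrans_patRestrict_eq htiles (ht.trans fun _ hm => hm.1)⟩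
  calc closedBall (x + t) R
      ⊆ (fun z => z + t) '' supp d (ballPatch T x (R + D)) := by
        rw [← image_add_right_closedBall]
        exact image_mono ((closedBall_subset_closedBall (by linarith)).trans hP)
    _ = supp d (patTrans d t (ballPatch T x (R + D))) := (supp_patTrans t _).symm
    _ ⊆ supp d (ballPatch T y (c * (3 * R))) := sUnion_mono ht
    _ ⊆ closedBall y ((3 * c + 1) * R) := hQ.trans (closedBall_subset_closedBall (by linarith))

end Tilings

section Invariance

variable {T : Set (Set (Pt d))} {w : Set (Pt d) → ℝ} {rw : ℝ} {ew : ℝ → ℝ}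

theorem AsympTilingInvariant.almostLinearlyRecurrent [NeZero d]
    (hw : AsympTilingInvariant d T w rw ew) (hT : LinearlyRecurrent T) :
    AlmostLinearlyRecurrent w := by
  obtain ⟨hanti, hlim, hinv⟩ := hw
  obtain ⟨C, hC, hrec⟩ := hT
  have hd : 0 < √d := Real.sqrt_pos.2 (Nat.cast_pos.2 (NeZero.pos d))
  refine ⟨2 * (C * (√d * 2)), by positivity, fun η hη => ?_⟩
  have hrec' := (tendsto_id.const_mul_atTop (by positivity : 0 < √d * 2)).eventually hrec
  filter_upwards [hrec', hlim.eventually (eventually_le_nhds hη), eventually_ge_atTop rw,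
    eventually_gt_atTop 0] with r hr hewr hrw hr₀ B hB a b hab
  have hwidth := hB.le_widthOf
  have hBbox := hB.isBox
  obtain ⟨a', b', -, rfl, hlen⟩ := hB
  have hball := boxSet_subset_closedBall (by positivity) fun j => (hlen j).2
  rw [← mul_assoc] at hball
  obtain ⟨y, hy⟩ := exists_closedBall_subset_boxSet (s := C * (√d * 2 * r)) (a := a) (b := b)
    fun j => (hab j).trans_eq' (by ring)
  obtain ⟨t, ht, hrestrict⟩ := hr (WithLp.toLp 2 a') y
  refine ⟨t, ?_, ?_⟩
  · refine (image_mono hball).trans ?_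
    rw [image_add_right_closedBall]
    exact ht.trans hy
  · have hdiff := hinv _ t hBbox (hrw.trans hwidth) (hrestrict _ hball)
    have herr : ew (widthOf d (boxSet d a' b')) * volOf d (boxSet d a' b') ≤
        η * volOf d (boxSet d a' b') :=
      mul_le_mul_of_nonneg_right ((hanti _ _ hrw hwidth).trans hewr) (volOf_nonneg _)
    linarith [neg_le_abs (w (boxSet d a' b') - w ((fun x => x + t) '' boxSet d a' b'))]

end Invariance

/-- Corollary 4.2. For a linearly repetitive tiling `T` and a
subadditive, asymptotically `T`-invariant function `w` on boxes, the means `w(B_n)/|B_n|`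
converge along every sequence of `r_n`-boxes with `r_n → ∞`, with a limit independent
of the sequence. -/
theorem tiling_subadditive_ergodic (d : ℕ) (T : Set (Set (Pt d)))
    (hT : IsTiling d T)
    (hadm : Admissible d (patternClassesOf d T))
    (hlr : LinearlyRepetitive d (patternClassesOf d T))
    (w : Set (Pt d) → ℝ)
    (hw : ∃ (dw rw : ℝ) (cw ew : ℝ → ℝ),
      BoxFnSubadditive d w dw rw cw ∧ AsympTilingInvariant d T w rw ew) :
    ∃ L : ℝ, ∀ (B : ℕ → Set (Pt d)) (r : ℕ → ℝ),
      (∀ n, IsRBox d (r n) (B n)) → Tendsto r atTop atTop →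
      Tendsto (fun n => w (B n) / volOf d (B n)) atTop (nhds L) := by
  obtain rfl | hd := eq_or_ne d 0
  · refine ⟨w univ / volOf 0 univ, fun B r hB _ => ?_⟩
    simp only [fun n => (hB n).isBox.eq_univ, tendsto_const_nhds]
  · have : NeZero d := ⟨hd⟩
    obtain ⟨dw, rw, cw, ew, hsub, hinv⟩ := hw
    obtain ⟨D, ε, htiles⟩ := hT.exists_hasUniformTiles hadm
    have hrec : LinearlyRecurrent T := hlr.linearlyRecurrent hT htiles
    obtain ⟨L, hL⟩ := hsub.exists_tendsto_div_volOf (hinv.almostLinearlyRecurrent hrec)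
    exact ⟨L, fun B r hB hr => hL.comp (tendsto_largeRBoxes hB hr)⟩

end
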